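/- Consider a pairwise separable convex program whose objective F is (λ,w)-scaled diagonally dominant, with the perturbed min-sum algorithm and initial messages satisfying the initialization assumption. Define p* ∈ ℝ^{E⃗} by p*_{i→j} = ∂f_{ij}/∂x_j(x*_i, x*_j) − (J^{(0)}_{i→j})'(x*_j). Then for every p ∈ ℝ^{E⃗} and every t ≥ 0, ‖x^{(t)}(p) − x*‖_∞ ≤ K · (λ^t/(1−λ)) · Σ_{(u,v)∈E⃗} | p_{u→v} − p*_{u→v} |. -/

import Mathlib

open Filter Finset

/-- Partial derivative of `F : (ι → ℝ) → ℝ` in coordinate `i` at `x`. -/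
noncomputable def pd {ι : Type*} [DecidableEq ι] (F : (ι → ℝ) → ℝ) (i : ι) (x : ι → ℝ) : ℝ :=
  deriv (fun y => F (Function.update x i y)) (x i)

/-- Second partial derivative `∂²F/∂x_i∂x_j` of `F : (ι → ℝ) → ℝ` at `x`. -/
noncomputable def pd2 {ι : Type*} [DecidableEq ι] (F : (ι → ℝ) → ℝ) (i j : ι) (x : ι → ℝ) : ℝ :=
  pd (pd F j) i x

/-- The directed edges `E⃗` of a simple graph. -/
abbrev EdgeDir {V : Type*} (G : SimpleGraph V) : Type _ := {e : V × V // G.Adj e.1 e.2}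

lemma pd_eq_fderiv {V : Type*} [Fintype V] [DecidableEq V] (F : (V → ℝ) → ℝ) (x : V → ℝ) (i : V)
    (hF : DifferentiableAt ℝ F x) : pd F i x = fderiv ℝ F x (Pi.single i 1) := by
  unfold pd
  have h1 : HasDerivAt (fun y => Function.update x i y) (Pi.single i (1:ℝ)) (x i) :=
    hasDerivAt_update x i (x i)
  have h2 : HasFDerivAt F (fderiv ℝ F x) (Function.update x i (x i)) := by
    rw [Function.update_eq_self]; exact hF.hasFDerivAt
  exact (h2.comp_hasDerivAt (x i) h1).deriv

lemma pd_fun_eq {V : Type*} [Fintype V] [DecidableEq V] (F : (V → ℝ) → ℝ) (i : V)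
    (hF : ContDiff ℝ 2 F) : pd F i = fun x => fderiv ℝ F x (Pi.single i 1) := by
  funext x
  exact pd_eq_fderiv F x i (hF.differentiable (by norm_num) x)

lemma pd_contDiff {V : Type*} [Fintype V] [DecidableEq V] (F : (V → ℝ) → ℝ) (i : V)
    (hF : ContDiff ℝ 2 F) : ContDiff ℝ 1 (pd F i) := by
  rw [pd_fun_eq F i hF]
  exact (hF.fderiv_right (m := 1) (by norm_num)).clm_apply contDiff_const

lemma pd2_symm {V : Type*} [Fintype V] [DecidableEq V] (F : (V → ℝ) → ℝ) (i j : V) (x : V → ℝ)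
    (hF : ContDiff ℝ 2 F) : pd2 F i j x = pd2 F j i x := by
  have key : ∀ i j, pd2 F i j x = fderiv ℝ (fderiv ℝ F) x (Pi.single i 1) (Pi.single j 1) := by
    intro i j
    unfold pd2
    rw [pd_eq_fderiv _ x i ((pd_contDiff F j hF).differentiable (by norm_num) x), pd_fun_eq F j hF]
    have hd : DifferentiableAt ℝ (fderiv ℝ F) x :=
      (hF.fderiv_right (m := 1) (by norm_num)).differentiable (by norm_num) x
    rw [fderiv_clm_apply hd (differentiableAt_const _)]
    simp
  rw [key, key]
  have := (hF.contDiffAt (x := x)).isSymmSndFDerivAt (by simp)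
  exact this _ _

lemma general_bound {V : Type*} [Fintype V] [DecidableEq V] (F : (V → ℝ) → ℝ)
    (hF : ContDiff ℝ 2 F) (M : ℝ) (hM : 0 < M) (hMle : ∀ (i : V) (x : V → ℝ), M ≤ pd2 F i i x)
    (lam : ℝ) (w : V → ℝ) (hlam0 : 0 < lam) (hw : ∀ i, 0 < w i)
    (hdd : ∀ (i : V) (x : V → ℝ),
      ∑ j ∈ univ.erase i, w j * |pd2 F i j x| ≤ lam * w i * pd2 F i i x)
    (i : V) (X Y : V → ℝ) (A ε : ℝ) (hA : 0 ≤ A) (hε : 0 ≤ ε)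
    (h1 : (X i - Y i) * (pd F i X - pd F i Y) ≤ |X i - Y i| * ε)
    (h2 : ∀ j, j ≠ i → |X j - Y j| ≤ w j * A) :
    |X i - Y i| ≤ w i * (lam * A) + ε / M := by
  have hline : ∀ s : ℝ, HasDerivAt (fun s : ℝ => pd F i (Y + s • (X - Y)))
      (fderiv ℝ (pd F i) (Y + s • (X - Y)) (X - Y)) s := by
    intro s
    have ha : HasDerivAt (fun s : ℝ => Y + s • (X - Y)) (X - Y) s := by
      simpa using ((hasDerivAt_id s).smul_const (X - Y)).const_add Y
    exact (((pd_contDiff F i hF).differentiable (by norm_num) _).hasFDerivAt).comp_hasDerivAt s ha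
  obtain ⟨s, -, hs⟩ := exists_hasDerivAt_eq_slope
    (fun s : ℝ => pd F i (Y + s • (X - Y))) _ (zero_lt_one)
    (fun s _ => (hline s).continuousAt.continuousWithinAt) (fun s _ => hline s)
  set Z := Y + s • (X - Y) with hZ
  have hsum : fderiv ℝ (pd F i) Z (X - Y) = ∑ j, (X j - Y j) * pd2 F i j Z := by
    conv_lhs => rw [pi_eq_sum_univ' (X - Y)]
    rw [map_sum]
    refine Finset.sum_congr rfl fun j _ => ?_
    rw [map_smul, pd2_symm F i j Z hF]
    unfold pd2
    rw [pd_eq_fderiv _ Z j ((pd_contDiff F i hF).differentiable (by norm_num) Z)]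
    simp
  have hs' : pd F i X - pd F i Y = ∑ j, (X j - Y j) * pd2 F i j Z := by
    rw [← hsum, hs]; simp
  rw [← Finset.add_sum_erase _ _ (Finset.mem_univ i)] at hs'
  set T := ∑ j ∈ univ.erase i, (X j - Y j) * pd2 F i j Z with hT
  have hTb : |T| ≤ A * (lam * w i * pd2 F i i Z) := by
    calc |T| ≤ ∑ j ∈ univ.erase i, |(X j - Y j) * pd2 F i j Z| := Finset.abs_sum_le_sum_abs _ _
      _ ≤ ∑ j ∈ univ.erase i, A * (w j * |pd2 F i j Z|) := by
        refine Finset.sum_le_sum fun j hj => ?_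
        rw [abs_mul]
        have := mul_le_mul_of_nonneg_right (h2 j (Finset.ne_of_mem_erase hj))
          (abs_nonneg (pd2 F i j Z))
        linarith
      _ = A * ∑ j ∈ univ.erase i, w j * |pd2 F i j Z| := by rw [Finset.mul_sum]
      _ ≤ _ := mul_le_mul_of_nonneg_left (hdd i Z) hA
  have hH := hMle i Z
  set H := pd2 F i i Z
  have hH0 : 0 < H := lt_of_lt_of_le hM hH
  set d := X i - Y i
  rw [hs'] at h1
  have hwi := hw i
  by_cases hd : d = 0
  · rw [hd]; simp; positivity
  have hdp : 0 < |d| := abs_pos.mpr hd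
  have h3 : |d| * (|d| * H) ≤ |d| * (ε + A * (lam * w i * H)) := by
    have : -(|d| * |T|) ≤ d * T := by rw [← abs_mul]; exact neg_abs_le _
    have h5 : |d| * |d| = d * d := abs_mul_abs_self d
    have h6 := mul_le_mul_of_nonneg_left hTb hdp.le
    nlinarith
  have h4 := le_of_mul_le_mul_left h3 hdp
  have h5 : |d| ≤ (ε + A * (lam * w i * H)) / H := by rwa [le_div_iff₀ hH0]
  have h6 : (ε + A * (lam * w i * H)) / H = ε / H + w i * (lam * A) := by field_simp
  have h7 : ε / H ≤ ε / M := div_le_div_of_nonneg_left hε hM hH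
  linarith

lemma F_contDiff {V : Type*} [Fintype V] [DecidableEq V]
    (G : SimpleGraph V) [DecidableRel G.Adj]
    (f : V → ℝ → ℝ) (g : V → V → ℝ → ℝ → ℝ)
    (hf_smooth : ∀ i, ContDiff ℝ 2 (f i))
    (hg_smooth : ∀ i j, G.Adj i j → ContDiff ℝ 2 (fun q : ℝ × ℝ => g i j q.1 q.2)) :
    ContDiff ℝ 2 (fun x : V → ℝ => (∑ i, f i (x i)) +
      (1 / 2) * ∑ i, ∑ j ∈ G.neighborFinset i, g i j (x i) (x j)) := by
  refine ContDiff.add (ContDiff.sum fun i _ => (hf_smooth i).comp (contDiff_apply ℝ ℝ i))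
    (contDiff_const.mul (ContDiff.sum fun i _ => ContDiff.sum fun j hj => ?_))
  exact (hg_smooth i j ((G.mem_neighborFinset i j).1 hj)).comp
    ((contDiff_apply ℝ ℝ i).prodMk (contDiff_apply ℝ ℝ j))

lemma g_left_contDiff {V : Type*} (G : SimpleGraph V) (g : V → V → ℝ → ℝ → ℝ)
    (hg_smooth : ∀ i j, G.Adj i j → ContDiff ℝ 2 (fun q : ℝ × ℝ => g i j q.1 q.2))
    (i j : V) (h : G.Adj i j) (b : ℝ) : ContDiff ℝ 2 (fun y => g i j y b) :=
  (hg_smooth i j h).comp (contDiff_id.prodMk contDiff_const)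

lemma pd_F {V : Type*} [Fintype V] [DecidableEq V]
    (G : SimpleGraph V) [DecidableRel G.Adj]
    (f : V → ℝ → ℝ) (g : V → V → ℝ → ℝ → ℝ)
    (hf_smooth : ∀ i, ContDiff ℝ 2 (f i))
    (hg_smooth : ∀ i j, G.Adj i j → ContDiff ℝ 2 (fun q : ℝ × ℝ => g i j q.1 q.2))
    (hg_symm : ∀ i j, G.Adj i j → ∀ a b : ℝ, g i j a b = g j i b a)
    (i : V) (X : V → ℝ) :
    pd (fun x : V → ℝ => (∑ i, f i (x i)) +
      (1 / 2) * ∑ i, ∑ j ∈ G.neighborFinset i, g i j (x i) (x j)) i X =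
    deriv (f i) (X i) + ∑ j ∈ G.neighborFinset i, deriv (fun y => g i j y (X j)) (X i) := by
  unfold pd
  have hgd : ∀ j, G.Adj i j → HasDerivAt (fun y => g i j y (X j))
      (deriv (fun y => g i j y (X j)) (X i)) (X i) := fun j hj =>
    ((g_left_contDiff G g hg_smooth i j hj (X j)).differentiable (by norm_num) _).hasDerivAt
  have h1 : ∀ a, HasDerivAt (fun y => f a (Function.update X i y a))
      (if a = i then deriv (f i) (X i) else 0) (X i) := by
    intro a
    split_ifs with h
    · subst h
      simpa using ((hf_smooth a).differentiable (by norm_num) (X a)).hasDerivAt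
    · simpa [Function.update_of_ne h] using hasDerivAt_const (X i) (f a (X a))
  have h2 : ∀ a, ∀ b ∈ G.neighborFinset a,
      HasDerivAt (fun y => g a b (Function.update X i y a) (Function.update X i y b))
      ((if a = i then deriv (fun y => g i b y (X b)) (X i) else 0) +
        (if b = i then deriv (fun y => g i a y (X a)) (X i) else 0)) (X i) := by
    intro a b hb
    have hab : G.Adj a b := (G.mem_neighborFinset a b).1 hb
    by_cases ha : a = i
    · subst ha
      have hne : b ≠ a := hab.ne'
      simpa [Function.update_of_ne hne, hne] using hgd b hab
    · by_cases hbi : b = i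
      · subst hbi
        have : (fun y => g a b (X a) y) = fun y => g b a y (X a) := by
          funext y; exact hg_symm a b hab _ _
        simpa [Function.update_of_ne ha, ha, this] using hgd a hab.symm
      · simpa [Function.update_of_ne ha, Function.update_of_ne hbi, ha, hbi] using
          hasDerivAt_const (X i) (g a b (X a) (X b))
  have h3 := (HasDerivAt.fun_sum (u := univ) fun a _ => h1 a).add
    ((HasDerivAt.fun_sum (u := univ) fun a _ => HasDerivAt.fun_sum (h2 a)).const_mul (1/2 : ℝ))
  refine h3.deriv.trans ?_
  have e1 : ∑ a, ∑ b ∈ G.neighborFinset a,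
      (if a = i then deriv (fun y => g i b y (X b)) (X i) else 0) =
      ∑ j ∈ G.neighborFinset i, deriv (fun y => g i j y (X j)) (X i) := by
    rw [Finset.sum_eq_single i]
    · simp
    · intro a _ ha; simp [ha]
    · simp
  have e2 : ∑ a, ∑ b ∈ G.neighborFinset a,
      (if b = i then deriv (fun y => g i a y (X a)) (X i) else 0) =
      ∑ j ∈ G.neighborFinset i, deriv (fun y => g i j y (X j)) (X i) := by
    simp only [Finset.sum_ite_eq', SimpleGraph.mem_neighborFinset]
    rw [← Finset.sum_filter]
    refine Finset.sum_congr ?_ fun _ _ => rfl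
    ext a; simp [G.adj_comm]
  simp only [Finset.sum_add_distrib]
  rw [e1, e2]
  simp only [Finset.sum_ite_eq', Finset.mem_univ, if_true]
  ring

lemma edge_sum_le {V : Type*} [Fintype V] [DecidableEq V]
    (G : SimpleGraph V) [DecidableRel G.Adj] (i : V) (S : Finset V) (hS : S ⊆ G.neighborFinset i)
    (c : EdgeDir G → ℝ) (hc : ∀ e, 0 ≤ c e) (q : V → ℝ)
    (hq : ∀ u (h : G.Adj u i), q u = c ⟨(u, i), h⟩) :
    ∑ u ∈ S, q u ≤ ∑ e, c e := by
  have hadj : ∀ u : S, G.Adj u i := fun u =>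
    ((G.mem_neighborFinset i u).1 (hS u.2)).symm
  let em : S ↪ EdgeDir G := ⟨fun u => ⟨(u, i), hadj u⟩, fun a b h => by
    simp only [Subtype.mk.injEq, Prod.mk.injEq] at h
    exact Subtype.ext h.1⟩
  calc ∑ u ∈ S, q u = ∑ u ∈ S.attach, q u := (Finset.sum_attach S q).symm
    _ = ∑ u ∈ S.attach, c (em u) := Finset.sum_congr rfl fun u _ => hq u (hadj u)
    _ = ∑ e ∈ S.attach.map em, c e := (Finset.sum_map _ _ _).symm
    _ ≤ _ := Finset.sum_le_sum_of_subset_of_nonneg (Finset.subset_univ _) fun e _ _ => hc e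

/-- **Error bound for the perturbed min-sum estimates** (Lemma 4 of Moallemi–Van Roy).
For a `(λ,w)`-scaled diagonally dominant pairwise separable convex program,
`‖x⁽ᵗ⁾(p) - x*‖_∞ ≤ K (λᵗ/(1-λ)) Σ_{(u,v)∈E⃗} |p_{u→v} - p*_{u→v}|` for every
perturbation `p` and every `t ≥ 0`. -/
theorem minSum_perturbed_error_bound
    {V : Type*} [Fintype V] [DecidableEq V] [Nonempty V]
    (G : SimpleGraph V) [DecidableRel G.Adj]
    -- the factors of the pairwise separable convex program
    (f : V → ℝ → ℝ) (g : V → V → ℝ → ℝ → ℝ)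
    (hf_sconv : ∀ i, StrictConvexOn ℝ Set.univ (f i))
    (hf_coer : ∀ i, Tendsto (f i) (cocompact ℝ) atTop)
    (hf_smooth : ∀ i, ContDiff ℝ 2 (f i))
    (hg_conv : ∀ i j, G.Adj i j → ConvexOn ℝ Set.univ (fun q : ℝ × ℝ => g i j q.1 q.2))
    (hg_smooth : ∀ i j, G.Adj i j → ContDiff ℝ 2 (fun q : ℝ × ℝ => g i j q.1 q.2))
    (hg_symm : ∀ i j, G.Adj i j → ∀ a b : ℝ, g i j a b = g j i b a)
    -- the objective function
    (F : (V → ℝ) → ℝ)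
    (hF : F = fun x => (∑ i, f i (x i)) +
      (1 / 2) * ∑ i, ∑ j ∈ G.neighborFinset i, g i j (x i) (x j))
    -- `M = min_i inf_x ∂²F/∂x_i²(x) > 0`
    (M : ℝ) (hM : 0 < M) (hMle : ∀ (i : V) (x : V → ℝ), M ≤ pd2 F i i x)
    -- the unique optimal solution
    (xstar : V → ℝ) (hxstar : ∀ y, y ≠ xstar → F xstar < F y)
    -- scaled diagonal dominance
    (lam : ℝ) (w : V → ℝ) (hlam0 : 0 < lam) (hlam1 : lam < 1) (hw : ∀ i, 0 < w i)
    (hdd : ∀ (i : V) (x : V → ℝ),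
      ∑ j ∈ univ.erase i, w j * |pd2 F i j x| ≤ lam * w i * pd2 F i i x)
    -- the initial messages and the initialization assumption
    (J0 : V → V → ℝ → ℝ)
    (hJ0smooth : ∀ i j, G.Adj i j → ContDiff ℝ 2 (J0 i j))
    (hJ0conv : ∀ i j, G.Adj i j → ∃ z : ℝ, ∀ xj : ℝ,
      deriv (deriv (fun b => g i j z b)) xj ≤ deriv (deriv (J0 i j)) xj)
    -- the perturbed min-sum messages and their update rule (minima are attained)
    (JP : ℕ → V → V → (EdgeDir G → ℝ) → ℝ → ℝ)
    (hJP0 : ∀ (i j : V) (h : G.Adj i j) (p : EdgeDir G → ℝ) (xj : ℝ),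
      JP 0 i j p xj = J0 i j xj + p ⟨(i, j), h⟩ * xj)
    (hJPrec : ∀ (t : ℕ) (i j : V), G.Adj i j → ∀ (p : EdgeDir G → ℝ) (xj : ℝ),
      IsLeast (Set.range fun y : ℝ =>
          f i y + g i j y xj + ∑ u ∈ (G.neighborFinset i).erase j, JP t u i p y)
        (JP (t + 1) i j p xj))
    -- the perturbed estimates: unique minimizers of the local objectives `b⁽ᵗ⁾_i(·, p)`
    (xEstP : ℕ → V → (EdgeDir G → ℝ) → ℝ)
    (hxEstP : ∀ (t : ℕ) (i : V) (p : EdgeDir G → ℝ) (y : ℝ), y ≠ xEstP t i p →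
      f i (xEstP t i p) + ∑ u ∈ G.neighborFinset i, JP t u i p (xEstP t i p) <
        f i y + ∑ u ∈ G.neighborFinset i, JP t u i p y)
    -- the perturbation `p*`
    (pstar : EdgeDir G → ℝ)
    (hpstar : ∀ (i j : V) (h : G.Adj i j),
      pstar ⟨(i, j), h⟩ =
        deriv (fun b => g i j (xstar i) b) (xstar j) - deriv (J0 i j) (xstar j)) :
    ∀ (p : EdgeDir G → ℝ) (t : ℕ) (r : V),
      |xEstP t r p - xstar r| ≤
        ((1 / M) * (univ.sup' univ_nonempty w / univ.inf' univ_nonempty w)) *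
          (lam ^ t / (1 - lam)) * ∑ e : EdgeDir G, |p e - pstar e| := by
  intro p t r
  have hFC : ContDiff ℝ 2 F := by
    rw [hF]; exact F_contDiff G f g hf_smooth hg_smooth
  have hpd : ∀ i X, pd F i X =
      deriv (f i) (X i) + ∑ j ∈ G.neighborFinset i, deriv (fun y => g i j y (X j)) (X i) := by
    intro i X
    rw [hF]; exact pd_F G f g hf_smooth hg_smooth hg_symm i X
  have hpdstar : ∀ i, pd F i xstar = 0 := by
    intro i
    have hmin : IsLocalMin (fun y => F (Function.update xstar i y)) (xstar i) := by
      refine Filter.Eventually.of_forall fun y => ?_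
      simp only [Function.update_eq_self]
      by_cases h : Function.update xstar i y = xstar
      · rw [h]
      · exact (hxstar _ h).le
    exact hmin.deriv_eq_zero
  have hfd : ∀ i y, HasDerivAt (f i) (deriv (f i) y) y := fun i y =>
    ((hf_smooth i).differentiable (by norm_num) y).hasDerivAt
  have hgd : ∀ i j, G.Adj i j → ∀ b y, HasDerivAt (fun y => g i j y b)
      (deriv (fun y => g i j y b) y) y := fun i j h b y =>
    ((g_left_contDiff G g hg_smooth i j h b).differentiable (by norm_num) y).hasDerivAt
  have hJd : ∀ i j, G.Adj i j → ∀ y, HasDerivAt (J0 i j) (deriv (J0 i j) y) y := fun i j h y =>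
    ((hJ0smooth i j h).differentiable (by norm_num) y).hasDerivAt
  set Q := ∑ e : EdgeDir G, |p e - pstar e| with hQ
  have hQ0 : 0 ≤ Q := Finset.sum_nonneg fun _ _ => abs_nonneg _
  set m := univ.inf' univ_nonempty w with hm
  set mx := univ.sup' univ_nonempty w with hmx
  have hm0 : 0 < m := by
    rw [hm, Finset.lt_inf'_iff]; exact fun i _ => hw i
  have hmle : ∀ i, m ≤ w i := fun i => Finset.inf'_le _ (Finset.mem_univ i)
  have hmxle : ∀ i, w i ≤ mx := fun i => Finset.le_sup' _ (Finset.mem_univ i)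
  have hl : 0 < 1 - lam := by linarith
  set P := Q / (M * m) with hP
  have hP0 : 0 ≤ P := by positivity
  set B := P / (1 - lam) with hB
  have hB0 : 0 ≤ B := by positivity
  have hPB : P = (1 - lam) * B := by rw [hB]; field_simp
  -- the general local bound
  have key : ∀ (t : ℕ) (i : V) (R : Finset V), R ⊆ G.neighborFinset i → ∀ (X : V → ℝ) (A y : ℝ),
      0 ≤ A → (∀ j ∈ R, |X j - xstar j| ≤ w j * A) →
      (∀ y' : ℝ, f i y + ∑ j ∈ R, g i j y (X j) + ∑ u ∈ G.neighborFinset i \ R, JP t u i p y ≤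
        f i y' + ∑ j ∈ R, g i j y' (X j) + ∑ u ∈ G.neighborFinset i \ R, JP t u i p y') →
      |y - xstar i| ≤ w i * max A (lam ^ t * B) := by
    intro t
    induction t with
    | zero =>
      intro i R hR X A y hA hX hmin
      have hiR : i ∉ R := fun h => by simpa using hR h
      have hadjR : ∀ j ∈ R, G.Adj i j := fun j hj => (G.mem_neighborFinset i j).1 (hR hj)
      have hadjS : ∀ u ∈ G.neighborFinset i \ R, G.Adj u i := fun u hu =>
        ((G.mem_neighborFinset i u).1 (Finset.mem_sdiff.1 hu).1).symm
      have hz : ∀ u, ∃ z : ℝ, G.Adj u i → ∀ xj : ℝ,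
          deriv (deriv (fun b => g u i z b)) xj ≤ deriv (deriv (J0 u i)) xj := by
        intro u
        by_cases h : G.Adj u i
        · obtain ⟨z, hz⟩ := hJ0conv u i h
          exact ⟨z, fun _ => hz⟩
        · exact ⟨0, fun h' => absurd h' h⟩
      choose z hz using hz
      let q : V → ℝ := fun u => if h : G.Adj u i then p ⟨(u, i), h⟩ else 0
      let qs : V → ℝ := fun u => if h : G.Adj u i then pstar ⟨(u, i), h⟩ else 0
      have hq : ∀ u (h : G.Adj u i), q u = p ⟨(u, i), h⟩ := fun u h => dif_pos h
      have hqs : ∀ u (h : G.Adj u i), qs u = pstar ⟨(u, i), h⟩ := fun u h => dif_pos h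
      -- stationarity at the leaf
      have hstat : deriv (f i) y + ∑ j ∈ R, deriv (fun y => g i j y (X j)) y
          + ∑ u ∈ G.neighborFinset i \ R, (deriv (J0 u i) y + q u) = 0 := by
        have hlm : IsLocalMin (fun y => f i y + ∑ j ∈ R, g i j y (X j) +
            ∑ u ∈ G.neighborFinset i \ R, (J0 u i y + q u * y)) y := by
          refine Filter.Eventually.of_forall fun y' => ?_
          have e : ∀ y, ∑ u ∈ G.neighborFinset i \ R, (J0 u i y + q u * y) =
              ∑ u ∈ G.neighborFinset i \ R, JP 0 u i p y := fun y =>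
            Finset.sum_congr rfl fun u hu => by
              rw [hJP0 u i (hadjS u hu), hq u (hadjS u hu)]
          simp only [e]
          exact hmin y'
        refine hlm.hasDerivAt_eq_zero ?_
        refine ((hfd i y).add (HasDerivAt.fun_sum fun j hj => hgd i j (hadjR j hj) (X j) y)).add
          (HasDerivAt.fun_sum fun u hu => ?_)
        have h9 : HasDerivAt (fun y => q u * y) (q u) y := by
          simpa using (hasDerivAt_id y).const_mul (q u)
        exact (hJd u i (hadjS u hu) y).add h9
      -- comparison of the initial messages with the sections of `g`
      have hcmp : ∀ u ∈ G.neighborFinset i \ R,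
          (y - xstar i) * (deriv (fun y => g i u y (z u)) y
            - deriv (fun y => g i u y (z u)) (xstar i)) ≤
          (y - xstar i) * (deriv (J0 u i) y - deriv (J0 u i) (xstar i)) := by
        intro u hu
        have hui := hadjS u hu
        have e : (fun b => g u i (z u) b) = fun y => g i u y (z u) := by
          funext b; exact hg_symm u i hui _ _
        have hzu := hz u hui
        rw [e] at hzu
        have hc1 : ContDiff ℝ 1 (deriv (J0 u i)) :=
          (contDiff_succ_iff_deriv (n := 1).1 (hJ0smooth u i hui)).2.2
        have hc2 : ContDiff ℝ 1 (deriv (fun y => g i u y (z u))) :=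
          (contDiff_succ_iff_deriv (n := 1).1
            (g_left_contDiff G g hg_smooth i u hui.symm (z u))).2.2
        have hd1 := hc1.differentiable (by norm_num)
        have hd2 := hc2.differentiable (by norm_num)
        have hmono : Monotone (fun x => deriv (J0 u i) x - deriv (fun y => g i u y (z u)) x) := by
          refine monotone_of_deriv_nonneg (hd1.sub hd2) fun x => ?_
          have : deriv (fun x => deriv (J0 u i) x - deriv (fun y => g i u y (z u)) x) x =
              deriv (deriv (J0 u i)) x - deriv (deriv (fun y => g i u y (z u))) x :=
            ((hd1 x).hasDerivAt.sub (hd2 x).hasDerivAt).deriv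
          rw [this]
          linarith [hzu x]
        rcases le_total (xstar i) y with h | h
        · have := hmono h
          simp only at this
          exact mul_le_mul_of_nonneg_left (by linarith) (by linarith)
        · have := hmono h
          simp only at this
          exact mul_le_mul_of_nonpos_left (by linarith) (by linarith)
      let X' : V → ℝ := fun j => if j = i then y else if j ∈ R then X j else z j
      let Y' : V → ℝ := fun j => if j = i then xstar i else if j ∈ R then xstar j else z j
      have hX'i : X' i = y := if_pos rfl
      have hY'i : Y' i = xstar i := if_pos rfl
      have hsplit : ∀ φ : V → ℝ, ∑ j ∈ G.neighborFinset i, φ j =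
          ∑ j ∈ R, φ j + ∑ j ∈ G.neighborFinset i \ R, φ j := fun φ => by
        rw [add_comm, Finset.sum_sdiff hR]
      have hXR : ∀ j ∈ R, X' j = X j := fun j hj => by
        have : j ≠ i := fun h => hiR (h ▸ hj)
        simp [X', this, hj]
      have hYR : ∀ j ∈ R, Y' j = xstar j := fun j hj => by
        have : j ≠ i := fun h => hiR (h ▸ hj)
        simp [Y', this, hj]
      have hXS : ∀ j ∈ G.neighborFinset i \ R, X' j = z j := fun j hj => by
        have : j ≠ i := (hadjS j hj).ne
        simp [X', this, (Finset.mem_sdiff.1 hj).2]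
      have hYS : ∀ j ∈ G.neighborFinset i \ R, Y' j = z j := fun j hj => by
        have : j ≠ i := (hadjS j hj).ne
        simp [Y', this, (Finset.mem_sdiff.1 hj).2]
      have hpX : pd F i X' = deriv (f i) y + (∑ j ∈ R, deriv (fun y => g i j y (X j)) y
          + ∑ u ∈ G.neighborFinset i \ R, deriv (fun y => g i u y (z u)) y) := by
        rw [hpd, hsplit, hX'i]
        congr 2
        · exact Finset.sum_congr rfl fun j hj => by rw [hXR j hj]
        · exact Finset.sum_congr rfl fun j hj => by rw [hXS j hj]
      have hpY : pd F i Y' = deriv (f i) (xstar i) +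
          (∑ j ∈ R, deriv (fun y => g i j y (xstar j)) (xstar i)
          + ∑ u ∈ G.neighborFinset i \ R, deriv (fun y => g i u y (z u)) (xstar i)) := by
        rw [hpd, hsplit, hY'i]
        congr 2
        · exact Finset.sum_congr rfl fun j hj => by rw [hYR j hj]
        · exact Finset.sum_congr rfl fun j hj => by rw [hYS j hj]
      have hps := hpdstar i
      rw [hpd, hsplit] at hps
      have hps2 : ∑ u ∈ G.neighborFinset i \ R, deriv (fun y => g i u y (xstar u)) (xstar i) =
          ∑ u ∈ G.neighborFinset i \ R, (deriv (J0 u i) (xstar i) + qs u) := by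
        refine Finset.sum_congr rfl fun u hu => ?_
        have hui := hadjS u hu
        rw [hqs u hui, hpstar u i hui]
        have e : (fun b => g u i (xstar u) b) = fun y => g i u y (xstar u) := by
          funext b; exact hg_symm u i hui _ _
        rw [e]; ring
      rw [hps2] at hps
      have hsumcmp := Finset.sum_le_sum hcmp
      rw [← Finset.mul_sum, ← Finset.mul_sum, Finset.sum_sub_distrib, Finset.sum_sub_distrib]
        at hsumcmp
      rw [Finset.sum_add_distrib] at hstat hps
      have hQb : |∑ u ∈ G.neighborFinset i \ R, (q u - qs u)| ≤ Q := by
        refine (Finset.abs_sum_le_sum_abs _ _).trans ?_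
        refine edge_sum_le G i _ Finset.sdiff_subset (fun e => |p e - pstar e|)
          (fun _ => abs_nonneg _) _ fun u h => ?_
        rw [hq u h, hqs u h]
      have hb := general_bound F hFC M hM hMle lam w hlam0 hw hdd i X' Y' A Q hA hQ0 (by
        rw [hX'i, hY'i, hpX, hpY]
        have h7 : -((y - xstar i) * ∑ u ∈ G.neighborFinset i \ R, (q u - qs u)) ≤
            |y - xstar i| * Q := by
          refine (neg_le_abs _).trans ?_
          rw [abs_mul]
          exact mul_le_mul_of_nonneg_left hQb (abs_nonneg _)
        rw [Finset.sum_sub_distrib] at h7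
        refine le_trans ?_ h7
        have h8 : ∀ a b c a' b' c' j j' s s' d : ℝ, a + b + (j + s) = 0 → a' + (b' + (j' + s')) = 0 →
            d * (c - c') ≤ d * (j - j') →
            d * (a + (b + c) - (a' + (b' + c'))) ≤ -(d * (s - s')) := by
          intro a b c a' b' c' j j' s s' d h1 h2 h3
          have e1 : a = -b - j - s := by linarith
          have e2 : a' = -b' - j' - s' := by linarith
          subst e1 e2
          nlinarith
        exact h8 _ _ _ _ _ _ _ _ _ _ _ hstat hps hsumcmp) (by
        intro j hj
        have hwA : 0 ≤ w j * A := mul_nonneg (hw j).le hA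
        by_cases hjR : j ∈ R
        · rw [hXR j hjR, hYR j hjR]; exact hX j hjR
        · simp only [X', Y', hj, hjR, if_false, sub_self, abs_zero]; exact hwA)
      rw [hX'i, hY'i] at hb
      have hQP : Q / M ≤ w i * P := by
        have : Q / M = m * P := by rw [hP]; field_simp
        rw [this]
        exact mul_le_mul_of_nonneg_right (hmle i) hP0
      have hmax : lam * A + P ≤ max A (lam ^ 0 * B) := by
        rw [pow_zero, one_mul, hPB]
        have h1 := le_max_left A B
        have h2 := le_max_right A B
        nlinarith
      calc |y - xstar i| ≤ w i * (lam * A) + Q / M := hb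
        _ ≤ w i * (lam * A + P) := by rw [mul_add]; linarith
        _ ≤ _ := mul_le_mul_of_nonneg_left hmax (hw i).le
    | succ t ih =>
      intro i R hR X A y hA hX hmin
      have hiR : i ∉ R := fun h => by simpa using hR h
      have hadjR : ∀ j ∈ R, G.Adj i j := fun j hj => (G.mem_neighborFinset i j).1 (hR hj)
      have hadjS : ∀ u ∈ G.neighborFinset i \ R, G.Adj u i := fun u hu =>
        ((G.mem_neighborFinset i u).1 (Finset.mem_sdiff.1 hu).1).symm
      have hch : ∀ u, ∃ x : ℝ, G.Adj u i → f u x + g u i x y +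
          ∑ v ∈ (G.neighborFinset u).erase i, JP t v u p x = JP (t + 1) u i p y := by
        intro u
        by_cases h : G.Adj u i
        · obtain ⟨x, hx⟩ := (hJPrec t u i h p y).1
          exact ⟨x, fun _ => hx⟩
        · exact ⟨0, fun h' => absurd h' h⟩
      choose c hc using hch
      set D := |y - xstar i| / w i with hD
      have hD0 : 0 ≤ D := div_nonneg (abs_nonneg _) (hw i).le
      have hDe : |y - xstar i| = w i * D := by
        have := (hw i).ne'
        rw [hD]; field_simp
      -- bound for the children
      have hcb : ∀ u ∈ G.neighborFinset i \ R, |c u - xstar u| ≤ w u * max D (lam ^ t * B) := by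
        intro u hu
        have hui := hadjS u hu
        refine ih u {i} (by simpa using hui) (fun _ => y) D (c u) hD0
          (by intro j hj; rw [Finset.mem_singleton.1 hj]; exact hDe.le) ?_
        intro y'
        simp only [Finset.sum_singleton, Finset.sdiff_singleton_eq_erase]
        rw [hc u hui]
        exact (hJPrec t u i hui p y).2 ⟨y', rfl⟩
      have hstat : deriv (f i) y + ∑ j ∈ R, deriv (fun y => g i j y (X j)) y
          + ∑ u ∈ G.neighborFinset i \ R, deriv (fun y => g i u y (c u)) y = 0 := by
        have hlm : IsLocalMin (fun y => f i y + ∑ j ∈ R, g i j y (X j) +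
            ∑ u ∈ G.neighborFinset i \ R, g i u y (c u)) y := by
          refine Filter.Eventually.of_forall fun y' => ?_
          have h1 := hmin y'
          have h2 : ∑ u ∈ G.neighborFinset i \ R, (JP (t + 1) u i p y' - JP (t + 1) u i p y) ≤
              ∑ u ∈ G.neighborFinset i \ R, (g i u y' (c u) - g i u y (c u)) := by
            refine Finset.sum_le_sum fun u hu => ?_
            have hui := hadjS u hu
            have h3 := hc u hui
            have h4 : JP (t + 1) u i p y' ≤ f u (c u) + g u i (c u) y' +
              ∑ v ∈ (G.neighborFinset u).erase i, JP t v u p (c u) :=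
              (hJPrec t u i hui p y').2 ⟨c u, rfl⟩
            rw [hg_symm u i hui] at h3 h4
            linarith
          rw [Finset.sum_sub_distrib, Finset.sum_sub_distrib] at h2
          linarith
        refine hlm.hasDerivAt_eq_zero ?_
        exact ((hfd i y).add (HasDerivAt.fun_sum fun j hj => hgd i j (hadjR j hj) (X j) y)).add
          (HasDerivAt.fun_sum fun u hu => hgd i u (hadjS u hu).symm (c u) y)
      let X' : V → ℝ := fun j => if j = i then y else if j ∈ R then X j else
        if j ∈ G.neighborFinset i then c j else xstar j
      have hX'i : X' i = y := if_pos rfl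
      have hXR : ∀ j ∈ R, X' j = X j := fun j hj => by
        have : j ≠ i := fun h => hiR (h ▸ hj)
        simp [X', this, hj]
      have hXS : ∀ j ∈ G.neighborFinset i \ R, X' j = c j := fun j hj => by
        have : j ≠ i := (hadjS j hj).ne
        simp only [X', this, (Finset.mem_sdiff.1 hj).2, (Finset.mem_sdiff.1 hj).1, if_true,
          if_false]
      have hpX : pd F i X' = 0 := by
        rw [hpd, ← Finset.sum_sdiff hR, hX'i]
        have e1 : ∑ j ∈ R, deriv (fun y => g i j y (X' j)) y =
            ∑ j ∈ R, deriv (fun y => g i j y (X j)) y :=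
          Finset.sum_congr rfl fun j hj => by rw [hXR j hj]
        have e2 : ∑ j ∈ G.neighborFinset i \ R, deriv (fun y => g i j y (X' j)) y =
            ∑ j ∈ G.neighborFinset i \ R, deriv (fun y => g i j y (c j)) y :=
          Finset.sum_congr rfl fun j hj => by rw [hXS j hj]
        rw [e1, e2]
        linarith
      set A' := max A (max D (lam ^ t * B)) with hA'
      have hA'0 : 0 ≤ A' := hA.trans (le_max_left _ _)
      have hb := general_bound F hFC M hM hMle lam w hlam0 hw hdd i X' xstar A' 0 hA'0 le_rfl
        (by rw [hpX, hpdstar]; simp) (by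
        intro j hj
        by_cases hjR : j ∈ R
        · rw [hXR j hjR]
          exact (hX j hjR).trans (mul_le_mul_of_nonneg_left (le_max_left _ _) (hw j).le)
        · by_cases hjN : j ∈ G.neighborFinset i
          · have hjS := Finset.mem_sdiff.2 ⟨hjN, hjR⟩
            rw [hXS j hjS]
            exact (hcb j hjS).trans (mul_le_mul_of_nonneg_left (le_max_right _ _) (hw j).le)
          · simp only [X', hj, hjR, hjN, if_false, sub_self, abs_zero]
            exact mul_nonneg (hw j).le hA'0)
      rw [hX'i, zero_div, add_zero, hDe] at hb
      have hD1 : D ≤ lam * A' := le_of_mul_le_mul_left hb (hw i)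
      rw [hDe]
      refine mul_le_mul_of_nonneg_left ?_ (hw i).le
      rcases max_choice A (max D (lam ^ t * B)) with h | h
      · rw [hA', h] at hD1
        refine le_trans ?_ (le_max_left _ _)
        nlinarith
      · rcases max_choice D (lam ^ t * B) with h' | h'
        · rw [hA', h, h'] at hD1
          have : D ≤ 0 := by nlinarith
          exact this.trans (hA.trans (le_max_left _ _))
        · rw [hA', h, h'] at hD1
          refine le_trans ?_ (le_max_right _ _)
          rw [pow_succ]; linarith
  have hfin := key t r ∅ (Finset.empty_subset _) xstar 0 (xEstP t r p) le_rfl (by simp) (by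
    intro y'
    simp only [Finset.sum_empty, Finset.sdiff_empty, add_zero]
    by_cases h : y' = xEstP t r p
    · rw [h]
    · exact (hxEstP t r p y' h).le)
  have hlB : 0 ≤ lam ^ t * B := by positivity
  rw [max_eq_right hlB] at hfin
  calc |xEstP t r p - xstar r| ≤ w r * (lam ^ t * B) := hfin
    _ ≤ mx * (lam ^ t * B) := mul_le_mul_of_nonneg_right (hmxle r) hlB
    _ = _ := by rw [hB, hP]; field_simp
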